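/- arXiv:1903.01174 — 2 statements merged into one kernel-verified Lean document; each statement's English description precedes it below -/
import Mathlib

section
/- Let U ⊆ ℂ be an open set and let F : U → ℝ be a C^∞-smooth function such that F_{zz̄} is nowhere vanishing on U. Define μ := F_{zz̄z̄} / F_{zz̄} on U, and suppose μ satisfies μ_{zz̄z̄} − 3·μ_{zz̄}·μ + 2·μ_z·μ² − μ_z·μ_{z̄} = 0 at every point of U. Then F is real-analytic on U. -/
open Complex

/-- The Wirtinger derivative `g_z = (1/2)(∂g/∂x - i ∂g/∂y)` of a function `g : ℂ → ℂ`,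
computed from the real Fréchet derivative. -/
noncomputable def wirtingerZ (g : ℂ → ℂ) : ℂ → ℂ :=
  fun z => (1 / 2 : ℂ) * (fderiv ℝ g z 1 - Complex.I * fderiv ℝ g z Complex.I)

/-- The conjugate Wirtinger derivative `g_z̄ = (1/2)(∂g/∂x + i ∂g/∂y)`. -/
noncomputable def wirtingerZbar (g : ℂ → ℂ) : ℂ → ℂ :=
  fun z => (1 / 2 : ℂ) * (fderiv ℝ g z 1 + Complex.I * fderiv ℝ g z Complex.I)

section LobodaAux

open Filter Topology ComplexConjugate

/-- `HW f p q z`: `f` is real differentiable at `z` with `f_z = p`, `f_z̄ = q`. -/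
def HW (f : ℂ → ℂ) (p q z : ℂ) : Prop :=
  HasFDerivAt (𝕜 := ℝ) f (p • (ContinuousLinearMap.id ℝ ℂ) + q • (conjCLE : ℂ →L[ℝ] ℂ)) z

theorem HW.congr' {f : ℂ → ℂ} {p q p' q' z : ℂ} (h : HW f p q z) (hp : p = p') (hq : q = q') :
    HW f p' q' z := by subst hp hq; exact h

theorem HW.congrF {f g : ℂ → ℂ} {p q z : ℂ} (h : HW f p q z) (hg : g =ᶠ[𝓝 z] f) :
    HW g p q z := HasFDerivAt.congr_of_eventuallyEq h hg

theorem HW.wz {f : ℂ → ℂ} {p q z : ℂ} (h : HW f p q z) : wirtingerZ f z = p := by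
  unfold wirtingerZ
  rw [HasFDerivAt.fderiv h]
  simp
  ring_nf
  simp
  ring

theorem HW.wzb {f : ℂ → ℂ} {p q z : ℂ} (h : HW f p q z) : wirtingerZbar f z = q := by
  unfold wirtingerZbar
  rw [HasFDerivAt.fderiv h]
  simp
  ring_nf
  simp
  ring

theorem HW.of_diff {f : ℂ → ℂ} {z : ℂ} (h : DifferentiableAt ℝ f z) :
    HW f (wirtingerZ f z) (wirtingerZbar f z) z := by
  have h1 := h.hasFDerivAt
  unfold HW
  convert h1 using 1
  ext w
  have e : w = w.re • (1:ℂ) + w.im • I := by simp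
  have e2 : fderiv ℝ f z w = w.re * fderiv ℝ f z 1 + w.im * fderiv ℝ f z I := by
    conv_lhs => rw [e]
    rw [map_add, map_smul, map_smul]; simp
  have e3 : conj w = w.re - w.im * I := by
    apply Complex.ext <;> simp
  have e4 : w = w.re + w.im * I := by simp
  rw [e2]
  simp only [wirtingerZ, wirtingerZbar, add_apply, smul_apply,
    ContinuousLinearMap.id_apply, ContinuousLinearEquiv.coe_coe, conjCLE_apply, smul_eq_mul, e3]
  generalize fderiv ℝ f z 1 = A
  generalize fderiv ℝ f z I = B
  have hI : I * I = -1 := I_mul_I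
  conv_lhs => enter [1,2]; rw [e4]
  linear_combination (-(w.im : ℂ) * B) * hI

theorem HW.diff {f : ℂ → ℂ} {p q z : ℂ} (h : HW f p q z) : DifferentiableAt ℝ f z :=
  HasFDerivAt.differentiableAt h

theorem HW.cont {f : ℂ → ℂ} {p q z : ℂ} (h : HW f p q z) : ContinuousAt f z :=
  h.diff.continuousAt

theorem HW.unique {f : ℂ → ℂ} {p q p' q' z : ℂ} (h : HW f p q z) (h' : HW f p' q' z) :
    p = p' ∧ q = q' := ⟨h.wz.symm.trans h'.wz, h.wzb.symm.trans h'.wzb⟩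

theorem HW.add {f g : ℂ → ℂ} {p q p' q' z : ℂ} (h : HW f p q z) (h' : HW g p' q' z) :
    HW (fun w => f w + g w) (p + p') (q + q') z := by
  refine (HasFDerivAt.add h h').congr_fderiv ?_
  ext w; simp; ring

theorem HW.sub {f g : ℂ → ℂ} {p q p' q' z : ℂ} (h : HW f p q z) (h' : HW g p' q' z) :
    HW (fun w => f w - g w) (p - p') (q - q') z := by
  refine (HasFDerivAt.sub h h').congr_fderiv ?_
  ext w; simp; ring

theorem HW.mul {f g : ℂ → ℂ} {p q p' q' z : ℂ} (h : HW f p q z) (h' : HW g p' q' z) :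
    HW (fun w => f w * g w) (p * g z + f z * p') (q * g z + f z * q') z := by
  refine (HasFDerivAt.mul h h').congr_fderiv ?_
  ext w; simp; ring

theorem HW.hol {g : ℂ → ℂ} {g' z : ℂ} (h : HasDerivAt g g' z) : HW g g' 0 z := by
  refine (h.hasFDerivAt.restrictScalars ℝ).congr_fderiv ?_
  ext w; simp [mul_comm]

theorem HW.const (c z : ℂ) : HW (fun _ => c) 0 0 z := HW.hol (hasDerivAt_const z c)

theorem HW.comp {f g : ℂ → ℂ} {p q g' z : ℂ} (hg : HasDerivAt g g' (f z)) (h : HW f p q z) :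
    HW (fun w => g (f w)) (g' * p) (g' * q) z := by
  refine (HasFDerivAt.comp z (hg.hasFDerivAt.restrictScalars ℝ) h).congr_fderiv ?_
  ext w; simp; ring

theorem HW.inv {f : ℂ → ℂ} {p q z : ℂ} (h : HW f p q z) (h0 : f z ≠ 0) :
    HW (fun w => (f w)⁻¹) (-p / (f z) ^ 2) (-q / (f z) ^ 2) z := by
  refine (HW.comp (hasDerivAt_inv h0) h).congr' ?_ ?_ <;> ring

theorem HW.conj {f : ℂ → ℂ} {p q z : ℂ} (h : HW f p q z) :
    HW (fun w => conj (f w)) (conj q) (conj p) z := by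
  refine (HasFDerivAt.comp z (conjCLE : ℂ →L[ℝ] ℂ).hasFDerivAt h).congr_fderiv ?_
  ext w; simp; ring

theorem HW.hasDerivAt {f : ℂ → ℂ} {p z : ℂ} (h : HW f p 0 z) : HasDerivAt f p z := by
  have h1 := h.diff
  have h2 := (HasFDerivAt.fderiv h)
  have : DifferentiableAt ℂ f z := by
    rw [differentiableAt_complex_iff_differentiableAt_real]
    refine ⟨h1, ?_⟩
    rw [h2]; simp; ring
  have h3 := (HW.hol this.hasDerivAt).unique h
  rw [← h3.1]; exact this.hasDerivAt

theorem HW.real {f : ℂ → ℂ} {p q z : ℂ} (h : HW f p q z) (hr : ∀ᶠ w in 𝓝 z, conj (f w) = f w) :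
    q = conj p := by
  have h1 := h.conj.congrF (g := f) (by filter_upwards [hr] with w hw using hw.symm)
  exact (h.unique h1).2

/-! ### smooth functions -/
theorem sm_wz {f : ℂ → ℂ} {z : ℂ} (h : ContDiffAt ℝ (⊤ : ℕ∞) f z) :
    ContDiffAt ℝ (⊤ : ℕ∞) (wirtingerZ f) z := by
  have h1 : ContDiffAt ℝ (⊤ : ℕ∞) (fderiv ℝ f) z := h.fderiv_right (by simp)
  unfold wirtingerZ
  fun_prop

theorem sm_wzb {f : ℂ → ℂ} {z : ℂ} (h : ContDiffAt ℝ (⊤ : ℕ∞) f z) :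
    ContDiffAt ℝ (⊤ : ℕ∞) (wirtingerZbar f) z := by
  have h1 : ContDiffAt ℝ (⊤ : ℕ∞) (fderiv ℝ f) z := h.fderiv_right (by simp)
  unfold wirtingerZbar
  fun_prop

theorem sm_HW {f : ℂ → ℂ} {z : ℂ} (h : ContDiffAt ℝ (⊤ : ℕ∞) f z) :
    HW f (wirtingerZ f z) (wirtingerZbar f z) z :=
  HW.of_diff (h.differentiableAt (by simp))

theorem sm_comm {f : ℂ → ℂ} {z : ℂ} (h : ContDiffAt ℝ (⊤ : ℕ∞) f z) :
    wirtingerZ (wirtingerZbar f) z = wirtingerZbar (wirtingerZ f) z := by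
  have h1 : ContDiffAt ℝ (⊤ : ℕ∞) (fderiv ℝ f) z := h.fderiv_right (by simp)
  have h1' : DifferentiableAt ℝ (fderiv ℝ f) z := h1.differentiableAt (by simp)
  have hs : IsSymmSndFDerivAt ℝ f z := h.isSymmSndFDerivAt (by simp; exact WithTop.coe_le_coe.2 (le_top : (2:ℕ∞) ≤ ⊤))
  have k : ∀ v : ℂ, HasFDerivAt (fun w => fderiv ℝ f w v)
      ((fderiv ℝ (fderiv ℝ f) z).flip v) z := fun v => by
    have := h1'.hasFDerivAt.clm_apply (hasFDerivAt_const v z)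
    simpa using this
  have hz : HasFDerivAt (wirtingerZ f) ((1/2 : ℂ) • ((fderiv ℝ (fderiv ℝ f) z).flip 1
      - I • (fderiv ℝ (fderiv ℝ f) z).flip I)) z :=
    ((k 1).sub ((k I).const_mul I)).const_mul (1/2 : ℂ)
  have hzb : HasFDerivAt (wirtingerZbar f) ((1/2 : ℂ) • ((fderiv ℝ (fderiv ℝ f) z).flip 1
      + I • (fderiv ℝ (fderiv ℝ f) z).flip I)) z :=
    ((k 1).add ((k I).const_mul I)).const_mul (1/2 : ℂ)
  have e := hs.eq 1 I
  conv_lhs => unfold wirtingerZ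
  conv_rhs => unfold wirtingerZbar
  rw [hz.fderiv, hzb.fderiv]
  simp
  rw [e]
  ring

theorem HW.mixed {f p q : ℂ → ℂ} {z p1 p2 q1 q2 : ℂ} (h : ContDiffAt ℝ (⊤ : ℕ∞) f z)
    (hf : ∀ᶠ w in 𝓝 z, HW f (p w) (q w) w) (hp : HW p p1 p2 z) (hq : HW q q1 q2 z) : p2 = q1 := by
  have e1 : wirtingerZ f =ᶠ[𝓝 z] p := by filter_upwards [hf] with w hw using hw.wz
  have e2 : wirtingerZbar f =ᶠ[𝓝 z] q := by filter_upwards [hf] with w hw using hw.wzb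
  rw [← (hp.congrF e1).wzb, ← (hq.congrF e2).wz, sm_comm h]

/-! ### germs -/
theorem HW.germ_const {f : ℂ → ℂ} {z₀ : ℂ} (h : ∀ᶠ z in 𝓝 z₀, HW f 0 0 z) :
    ∀ᶠ z in 𝓝 z₀, f z = f z₀ := by
  obtain ⟨r, hr, hb⟩ := Metric.eventually_nhds_iff_ball.1 h
  refine Metric.eventually_nhds_iff_ball.2 ⟨r, hr, fun z hz => ?_⟩
  refine (convex_ball z₀ r).is_const_of_fderivWithin_eq_zero (𝕜 := ℝ) (f := f)
    (fun w hw => (hb w hw).diff.differentiableWithinAt) (fun w hw => ?_) hz (Metric.mem_ball_self hr)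
  rw [fderivWithin_of_isOpen Metric.isOpen_ball hw, HasFDerivAt.fderiv (hb w hw)]
  ext v; simp

theorem germ_analytic {f : ℂ → ℂ} {z₀ : ℂ} (h : ∀ᶠ z in 𝓝 z₀, DifferentiableAt ℂ f z) :
    AnalyticAt ℂ f z₀ := analyticAt_iff_eventually_differentiableAt.2 h

theorem germ_prim {f : ℂ → ℂ} {z₀ : ℂ} (h : AnalyticAt ℂ f z₀) :
    ∃ E : ℂ → ℂ, E z₀ = 0 ∧ ∀ᶠ z in 𝓝 z₀, HasDerivAt E (f z) z := by
  obtain ⟨r, hr, hb⟩ := Metric.eventually_nhds_iff_ball.1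
    (analyticAt_iff_eventually_differentiableAt.1 h)
  have hd : DifferentiableOn ℂ f (Metric.ball z₀ r) :=
    fun w hw => (hb w hw).differentiableWithinAt
  obtain ⟨E, h0, hE⟩ := hd.isExactOn_ball.with_val_at z₀ 0
  exact ⟨E, h0, Metric.eventually_nhds_iff_ball.2 ⟨r, hr, hE⟩⟩

theorem germ_hol {E f : ℂ → ℂ} {z₀ : ℂ} (h : ∀ᶠ z in 𝓝 z₀, HasDerivAt E (f z) z) :
    AnalyticAt ℂ E z₀ := germ_analytic (h.mono fun _ hz => hz.differentiableAt)

theorem conj_analytic {f : ℂ → ℂ} {z₀ : ℂ} (h : AnalyticAt ℝ f z₀) :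
    AnalyticAt ℝ (fun z => conj (f z)) z₀ :=
  ((conjCLE : ℂ →L[ℝ] ℂ).analyticAt _).comp h

theorem germ_antihol {f q : ℂ → ℂ} {z₀ : ℂ} (h : ∀ᶠ z in 𝓝 z₀, HW f 0 (q z) z) :
    AnalyticAt ℝ f z₀ := by
  have h1 : AnalyticAt ℂ (fun z => conj (f z)) z₀ := by
    apply germ_analytic
    filter_upwards [h] with z hz
    have := hz.conj
    simp only [map_zero] at this
    exact this.hasDerivAt.differentiableAt
  have := conj_analytic (h1.restrictScalars (𝕜 := ℝ))
  simpa using this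

theorem germ_harmonic {f p q : ℂ → ℂ} {z₀ : ℂ} (h : ∀ᶠ z in 𝓝 z₀, HW f (p z) (q z) z)
    (h2 : ∀ᶠ z in 𝓝 z₀, ∃ p1, HW p p1 0 z) : AnalyticAt ℝ f z₀ := by
  have hp : AnalyticAt ℂ p z₀ := by
    apply germ_analytic
    filter_upwards [h2] with z ⟨p1, hz⟩ using hz.hasDerivAt.differentiableAt
  obtain ⟨E, -, hE⟩ := germ_prim hp
  have h3 : AnalyticAt ℝ (fun z => f z - E z) z₀ := by
    apply germ_antihol (q := q)
    filter_upwards [h, hE] with z hz hE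
    exact (hz.sub (HW.hol hE)).congr' (by simp) (by simp)
  have := h3.add (germ_hol hE).restrictScalars (𝕜 := ℝ)
  refine this.congr (Eventually.of_forall fun z => by simp)

theorem germ_final {f p q g p' q' h : ℂ → ℂ} {z₀ : ℂ} (hf : ∀ᶠ z in 𝓝 z₀, HW f (p z) (q z) z)
    (hf2 : ∀ᶠ z in 𝓝 z₀, ∃ p1, HW p p1 (h z) z)
    (hga : AnalyticAt ℝ g z₀) (hg : ∀ᶠ z in 𝓝 z₀, HW g (p' z) (q' z) z)
    (hg2 : ∀ᶠ z in 𝓝 z₀, ∃ p1, HW p' p1 (h z) z) : AnalyticAt ℝ f z₀ := by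
  have h3 : AnalyticAt ℝ (fun z => f z - g z) z₀ := by
    refine germ_harmonic (p := fun z => p z - p' z) (q := fun z => q z - q' z) ?_ ?_
    · filter_upwards [hf, hg] with z h1 h2 using h1.sub h2
    · filter_upwards [hf2, hg2] with z ⟨a, h1⟩ ⟨b, h2⟩
      exact ⟨_, (h1.sub h2).congr' rfl (by simp)⟩
  refine (h3.add hga).congr (Eventually.of_forall fun z => by simp)



/-- The package of local identities at the point `z₀`. -/
structure Pack (f h μ s a : ℂ → ℂ) (z₀ : ℂ) : Prop where
  sm_s : ∀ᶠ z in 𝓝 z₀, ContDiffAt ℝ (⊤ : ℕ∞) s z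
  sm_μ : ∀ᶠ z in 𝓝 z₀, ContDiffAt ℝ (⊤ : ℕ∞) μ z
  hF : ∃ p q : ℂ → ℂ, (∀ᶠ z in 𝓝 z₀, HW f (p z) (q z) z) ∧
    ∀ᶠ z in 𝓝 z₀, ∃ p1, HW p p1 (h z) z
  h0 : ∀ᶠ z in 𝓝 z₀, h z ≠ 0
  hr : ∀ᶠ z in 𝓝 z₀, conj (h z) = h z
  sr : ∀ᶠ z in 𝓝 z₀, conj (s z) = s z
  hh : ∀ᶠ z in 𝓝 z₀, HW h (h z * conj (μ z)) (h z * μ z) z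
  hμ : ∀ᶠ z in 𝓝 z₀, ∃ m, HW μ (s z * h z) m z
  hs : ∀ᶠ z in 𝓝 z₀, HW s (h z * conj (a z)) (h z * a z) z
  ha : ∀ᶠ z in 𝓝 z₀, HasDerivAt a (deriv a z) z

theorem mk_pack (U : Set ℂ) (hU : IsOpen U)
    (F : ℂ → ℝ) (hF : ContDiffOn ℝ (⊤ : ℕ∞) F U)
    (hnv : ∀ z ∈ U, wirtingerZbar (wirtingerZ (fun w => (F w : ℂ))) z ≠ 0)
    (μ : ℂ → ℂ)
    (hμ : μ = fun z =>
      wirtingerZbar (wirtingerZbar (wirtingerZ (fun w => (F w : ℂ)))) z /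
        wirtingerZbar (wirtingerZ (fun w => (F w : ℂ))) z)
    (heq : ∀ z ∈ U,
      wirtingerZbar (wirtingerZbar (wirtingerZ μ)) z
        - 3 * wirtingerZbar (wirtingerZ μ) z * μ z
        + 2 * wirtingerZ μ z * (μ z) ^ 2
        - wirtingerZ μ z * wirtingerZbar μ z = 0) (z₀ : ℂ) (hz₀ : z₀ ∈ U) :
    ∃ h s a, Pack (fun w => (F w : ℂ)) h μ s a z₀ := by
  set f : ℂ → ℂ := fun w => (F w : ℂ) with hf
  have smf : ∀ z ∈ U, ContDiffAt ℝ (⊤ : ℕ∞) f z := fun z hz =>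
    (ofRealCLM.contDiff.contDiffAt).comp z (hF.contDiffAt (hU.mem_nhds hz))
  set h := wirtingerZbar (wirtingerZ f) with hh
  have smh : ∀ z ∈ U, ContDiffAt ℝ (⊤ : ℕ∞) h z := fun z hz => sm_wzb (sm_wz (smf z hz))
  have smμ : ∀ z ∈ U, ContDiffAt ℝ (⊤ : ℕ∞) μ z := fun z hz => by
    rw [hμ]; simp only [div_eq_mul_inv]
    exact (sm_wzb (smh z hz)).mul ((smh z hz).inv (hnv z hz))
  have ev : ∀ z ∈ U, ∀ᶠ w in 𝓝 z, w ∈ U := fun z hz => hU.mem_nhds hz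
  have EV : ∀ {p : ℂ → Prop}, (∀ z ∈ U, p z) → ∀ z ∈ U, ∀ᶠ w in 𝓝 z, p w := fun hp z hz => by
    filter_upwards [ev z hz] with w hw using hp w hw
  -- reality of h
  have fzb : ∀ z ∈ U, wirtingerZbar f z = conj (wirtingerZ f z) := fun z hz =>
    (sm_HW (smf z hz)).real (Eventually.of_forall fun w => by simp [hf])
  have hr : ∀ z ∈ U, conj (h z) = h z := fun z hz => by
    have h1 := (sm_HW (sm_wz (smf z hz))).conj.congrF (g := wirtingerZbar f) (EV fzb z hz)
    rw [hh, ← h1.wz, sm_comm (smf z hz)]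
  -- first derivatives of h
  have hzb : ∀ z ∈ U, wirtingerZbar h z = h z * μ z := fun z hz => by
    have := hnv z hz
    rw [hμ]; field_simp
  have hz' : ∀ z ∈ U, HW h (h z * conj (μ z)) (h z * μ z) z := fun z hz => by
    have h1 := sm_HW (smh z hz)
    have h2 := h1.real (EV hr z hz)
    refine h1.congr' ?_ (hzb z hz)
    rw [← conj_conj (wirtingerZ h z), ← h2, hzb z hz, map_mul, hr z hz]
  set ρ := wirtingerZ μ with hρ
  have smρ : ∀ z ∈ U, ContDiffAt ℝ (⊤ : ℕ∞) ρ z := fun z hz => sm_wz (smμ z hz)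
  have ρr : ∀ z ∈ U, conj (ρ z) = ρ z := fun z hz => by
    have h1 := sm_HW (smμ z hz)
    have h2 := (hz' z hz)
    have h3 := HW.mixed (smh z hz) (EV hz' z hz) (h2.mul h1.conj) (h2.mul h1)
    have h4 := hnv z hz
    have : h z * conj (ρ z) = h z * ρ z := by linear_combination h3
    exact mul_left_cancel₀ h4 this
  set s : ℂ → ℂ := fun z => ρ z * (h z)⁻¹ with hs
  have sms : ∀ z ∈ U, ContDiffAt ℝ (⊤ : ℕ∞) s z := fun z hz =>
    (smρ z hz).mul ((smh z hz).inv (hnv z hz))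
  have sr : ∀ z ∈ U, conj (s z) = s z := fun z hz => by
    simp only [hs, map_mul, map_inv₀, ρr z hz, hr z hz]
  set ρb := wirtingerZbar ρ with hρb
  set a : ℂ → ℂ := fun z => (ρb z - ρ z * μ z) * ((h z)⁻¹ * (h z)⁻¹) with ha
  have hs' : ∀ z ∈ U, HW s (h z * conj (a z)) (h z * a z) z := fun z hz => by
    have h0 := hnv z hz
    have h1 := (sm_HW (smρ z hz)).mul ((hz' z hz).inv h0)
    have h2 : ρb z * (h z)⁻¹ + ρ z * (-(h z * μ z) / h z ^ 2) = h z * a z := by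
      simp only [ha]; field_simp; ring
    have h3 := h1.congr' rfl h2
    have h4 := h3.real (EV sr z hz)
    refine h3.congr' ?_ rfl
    rw [← conj_conj (wirtingerZ ρ z * (h z)⁻¹ + ρ z * (-(h z * conj (μ z)) / h z ^ 2)), ← h4,
      map_mul, hr z hz]
  have ha' : ∀ z ∈ U, HasDerivAt a (deriv a z) z := fun z hz => by
    have h0 := hnv z hz
    have h1 := ((sm_HW (sm_wzb (smρ z hz))).sub ((sm_HW (smρ z hz)).mul (sm_HW (smμ z hz)))).mul
      (((hz' z hz).inv h0).mul ((hz' z hz).inv h0))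
    refine (HW.hasDerivAt (h1.congr' rfl ?_)).differentiableAt.hasDerivAt
    have e := heq z hz
    simp only [← hρb] at e ⊢
    field_simp
    linear_combination e
  refine ⟨h, s, a, EV sms z₀ hz₀, EV smμ z₀ hz₀, ⟨wirtingerZ f, wirtingerZbar f, ?_, ?_⟩,
    EV hnv z₀ hz₀, EV hr z₀ hz₀, EV sr z₀ hz₀, EV hz' z₀ hz₀, ?_, EV hs' z₀ hz₀, EV ha' z₀ hz₀⟩
  · exact EV (fun z hz => sm_HW (smf z hz)) z₀ hz₀
  · exact EV (fun z hz => ⟨_, sm_HW (sm_wz (smf z hz))⟩) z₀ hz₀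
  · refine EV (fun z hz => ⟨_, (sm_HW (smμ z hz)).congr' ?_ rfl⟩) z₀ hz₀
    have h0 := hnv z hz
    simp only [hs]; field_simp; rfl

variable {f h μ s a : ℂ → ℂ} {z₀ : ℂ}



theorem germ_real_hol {q : ℂ → ℂ} {z₀ : ℂ} (h1 : ∀ᶠ z in 𝓝 z₀, conj (q z) = q z)
    (h2 : ∀ᶠ z in 𝓝 z₀, ∃ p, HW q p 0 z) : ∀ᶠ z in 𝓝 z₀, q z = q z₀ := by
  apply HW.germ_const
  filter_upwards [h2, h1.eventually_nhds] with z ⟨p, hp⟩ hr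
  have := hp.real hr
  have : p = 0 := by simpa using this.symm
  exact hp.congr' this rfl

theorem Pack.consts (P : Pack f h μ s a z₀) : ∃ c d : ℂ, conj c = c ∧ conj d = d ∧
    (∀ᶠ z in 𝓝 z₀, a z * conj (μ z) + deriv a z = s z ^ 2 / 2 + c) ∧
    (∀ᶠ z in 𝓝 z₀, h z * (a z * conj (a z)) = s z ^ 3 / 6 + c * s z + d) := by
  have haa : AnalyticAt ℂ a z₀ := germ_hol P.ha
  have ha2 : ∀ᶠ z in 𝓝 z₀, HasDerivAt (deriv a) (deriv (deriv a) z) z :=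
    (analyticAt_iff_eventually_differentiableAt.1 haa.deriv).mono fun z hz => hz.hasDerivAt
  set q : ℂ → ℂ := fun z => a z * conj (μ z) + deriv a z - s z * s z * (1/2) with hq
  have qd : ∀ᶠ z in 𝓝 z₀, ∃ p, HW q p 0 z := by
    filter_upwards [P.ha, ha2, P.hμ, P.hs, P.hr, P.sr] with z h1 h2 ⟨m, h3⟩ h4 h5 h6
    refine ⟨_, ((((HW.hol h1).mul h3.conj).add (HW.hol h2)).sub
      ((h4.mul h4).mul (HW.const (1/2) z))).congr' rfl ?_⟩
    simp only [map_mul, h5, h6]; ring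
  have qr : ∀ᶠ z in 𝓝 z₀, conj (q z) = q z := by
    filter_upwards [P.ha, P.hs, P.hs.eventually_nhds, P.sm_s, P.hh, P.h0, P.sr] with z h1 h2 h3 h4 h5 h0 h6
    have e := HW.mixed h4 h3 (h5.mul (HW.hol h1).conj) (h5.mul (HW.hol h1))
    have e2 : h z * conj (q z) = h z * q z := by
      simp only [hq, map_add, map_sub, map_mul, conj_conj, h6, map_one, map_div₀, Complex.conj_ofNat]
      linear_combination e
    exact mul_left_cancel₀ h0 e2
  have qc := germ_real_hol qr qd
  set c := q z₀ with hc
  have cr : conj c = c := qr.self_of_nhds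
  have E1 : ∀ᶠ z in 𝓝 z₀, a z * conj (μ z) + deriv a z = s z ^ 2 / 2 + c := by
    filter_upwards [qc] with z hz
    rw [← hz]; simp only [hq]; ring
  set X : ℂ → ℂ := fun z => h z * (a z * conj (a z)) - (s z * (s z * s z) * (1/6) + c * s z) with hX
  have Xr : ∀ᶠ z in 𝓝 z₀, conj (X z) = X z := by
    filter_upwards [P.hr, P.sr] with z h5 h6
    simp only [hX, map_add, map_sub, map_mul, conj_conj, h5, h6, map_one, map_div₀, cr, Complex.conj_ofNat]
    ring
  have Xd : ∀ᶠ z in 𝓝 z₀, ∃ p, HW X p 0 z := by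
    filter_upwards [P.ha, P.hh, P.hs, P.sr, E1] with z h1 h2 h4 h6 e
    refine ⟨_, ((h2.mul ((HW.hol h1).mul (HW.hol h1).conj)).sub
      (((h4.mul (h4.mul h4)).mul (HW.const (1/6) z)).add ((HW.const c z).mul h4))).congr' rfl ?_⟩
    have e' := congrArg conj e
    simp only [map_add, map_mul, conj_conj, map_div₀, map_pow, h6, cr, Complex.conj_ofNat] at e'
    linear_combination (h z * a z) * e'
  have Xc := germ_real_hol Xr Xd
  refine ⟨c, X z₀, cr, Xr.self_of_nhds, E1, ?_⟩
  filter_upwards [Xc] with z hz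
  rw [← hz]; simp only [hX]; ring

/-- Conclusion from analyticity of `s` together with `B = (w - s₀)/P(w)`. -/
theorem Pack.concl (P : Pack f h μ s a z₀) {c d : ℂ} (cr : conj c = c)
    (E1 : ∀ᶠ z in 𝓝 z₀, a z * conj (μ z) + deriv a z = s z ^ 2 / 2 + c)
    (E2 : ∀ᶠ z in 𝓝 z₀, h z * (a z * conj (a z)) = s z ^ 3 / 6 + c * s z + d)
    {B : ℂ → ℂ} (hB : AnalyticAt ℂ B (s z₀))
    (hB2 : ∀ᶠ w in 𝓝 (s z₀), (w ^ 3 / 6 + c * w + d) * B w = w - s z₀)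
    (hs : AnalyticAt ℝ s z₀) : AnalyticAt ℝ f z₀ := by
  obtain ⟨p, q, hF1, hF2⟩ := P.hF
  obtain ⟨ψ, -, hψ⟩ := germ_prim hB
  have hB' : ∀ᶠ w in 𝓝 (s z₀), HasDerivAt B (deriv B w) w :=
    (analyticAt_iff_eventually_differentiableAt.1 hB).mono fun z hz => hz.hasDerivAt
  have hB3 : ∀ᶠ w in 𝓝 (s z₀), (w ^ 2 / 2 + c) * B w + (w ^ 3 / 6 + c * w + d) * deriv B w = 1 := by
    filter_upwards [hB', hB2.eventually_nhds] with w h1 h2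
    have e1 : HasDerivAt (fun w : ℂ => w ^ 3 / 6 + c * w + d) (w ^ 2 / 2 + c) w := by
      have := ((((hasDerivAt_id w).pow 3).div_const 6).add ((hasDerivAt_id w).const_mul c)).add_const d
      refine this.congr_deriv ?_
      simp; ring
    have e2 := (e1.mul h1)
    have e3 : HasDerivAt (fun w : ℂ => w - s z₀) 1 w := (hasDerivAt_id w).sub_const _
    have e4 := e3.congr_of_eventuallyEq h2
    exact e2.unique e4
  have cont : ContinuousAt s z₀ := hs.continuousAt
  refine germ_final (g := fun z => ψ (s z)) (p' := fun z => B (s z) * (h z * conj (a z)))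
    (q' := fun z => B (s z) * (h z * a z)) hF1 hF2 ?_ ?_ ?_
  · exact (germ_hol hψ).restrictScalars (𝕜 := ℝ).comp hs
  · filter_upwards [cont.eventually hψ, P.hs] with z h1 h2 using HW.comp h1 h2
  · filter_upwards [cont.eventually hB', cont.eventually hB3, P.hs, P.hh, P.ha, E1, E2, P.sr]
      with z h1 h2 h3 h4 h5 e1 e2 h6
    refine ⟨_, ((HW.comp h1 h3).mul (h4.mul (HW.hol h5).conj)).congr' rfl ?_⟩
    have e' := congrArg conj e1
    simp only [map_add, map_mul, conj_conj, map_div₀, map_pow, h6, cr, Complex.conj_ofNat] at e'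
    linear_combination (B (s z) * h z) * e' + h z * deriv B (s z) * e2 + h z * h2

theorem inv_analytic {Q g : ℂ → ℂ} {Q' z₀ : ℂ} (hQ : AnalyticAt ℂ Q (g z₀))
    (hQ' : HasDerivAt Q Q' (g z₀)) (h0 : Q' ≠ 0) (hg : ContinuousAt g z₀)
    (hA : AnalyticAt ℝ (fun z => Q (g z)) z₀) : AnalyticAt ℝ g z₀ := by
  have hs : HasStrictDerivAt Q Q' (g z₀) := by
    have := hQ.hasStrictDerivAt
    rwa [hQ'.deriv] at this
  have hs' := hs.hasStrictFDerivAt_equiv h0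
  have hl := hs'.eventually_left_inverse
  have hla : AnalyticAt ℂ (hs'.localInverse _ _ _) (Q (g z₀)) := by
    have hd := hQ.contDiffAt (n := ⊤)
    exact (hd.to_localInverse (f' := ContinuousLinearEquiv.unitsEquivAut ℂ (Units.mk0 Q' h0)) hs'.hasFDerivAt (by simp)).analyticAt
  refine (AnalyticAt.comp (f := fun z => Q (g z)) (x := z₀) (hla.restrictScalars (𝕜 := ℝ)) hA).congr ?_
  filter_upwards [hg.eventually hl] with z hz using hz


theorem Pack.cont_s (P : Pack f h μ s a z₀) : ContinuousAt s z₀ := P.hs.self_of_nhds.cont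

theorem Pack.case1 (P : Pack f h μ s a z₀) {c d : ℂ} (cr : conj c = c)
    (E1 : ∀ᶠ z in 𝓝 z₀, a z * conj (μ z) + deriv a z = s z ^ 2 / 2 + c)
    (E2 : ∀ᶠ z in 𝓝 z₀, h z * (a z * conj (a z)) = s z ^ 3 / 6 + c * s z + d)
    (ha0 : a z₀ ≠ 0) : AnalyticAt ℝ f z₀ := by
  have hp0 : s z₀ ^ 3 / 6 + c * s z₀ + d ≠ 0 := by
    rw [← E2.self_of_nhds]
    exact mul_ne_zero P.h0.self_of_nhds (mul_ne_zero ha0 (by simpa using ha0))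
  have pa : AnalyticAt ℂ (fun w : ℂ => w ^ 3 / 6 + c * w + d) (s z₀) := by fun_prop
  have pev : ∀ᶠ w in 𝓝 (s z₀), w ^ 3 / 6 + c * w + d ≠ 0 := pa.continuousAt.eventually_ne hp0
  have pia : AnalyticAt ℂ (fun w : ℂ => (w ^ 3 / 6 + c * w + d)⁻¹) (s z₀) := pa.inv hp0
  have haa : AnalyticAt ℂ a z₀ := germ_hol P.ha
  have aev : ∀ᶠ z in 𝓝 z₀, a z ≠ 0 := haa.continuousAt.eventually_ne ha0
  obtain ⟨Q, -, hQ⟩ := germ_prim pia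
  obtain ⟨W, -, hW⟩ := germ_prim (haa.inv ha0)
  have key : ∀ᶠ z in 𝓝 z₀, HW (fun z => Q (s z) - (W z + conj (W z))) 0 0 z := by
    filter_upwards [P.cont_s.eventually hQ, hW, aev, P.cont_s.eventually pev, E2, P.hs] with
      z h1 h2 h3 h4 e h5
    have h3' : conj (a z) ≠ 0 := by simpa using h3
    rw [← e] at h1 h4
    have h6 : h z ≠ 0 := fun h => h4 (by simp [h])
    refine ((HW.comp h1 h5).sub ((HW.hol h2).add (HW.hol h2).conj)).congr' ?_ ?_
    · simp only [map_zero, Pi.inv_apply]; field_simp; simp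
    · simp only [map_inv₀, Pi.inv_apply]; field_simp; simp
  have kc := HW.germ_const key
  set C := Q (s z₀) - (W z₀ + conj (W z₀)) with hC
  have hWa : AnalyticAt ℝ W z₀ := (germ_hol hW).restrictScalars
  have sa : AnalyticAt ℝ s z₀ := by
    refine inv_analytic (germ_hol hQ) hQ.self_of_nhds (inv_ne_zero hp0) P.cont_s ?_
    have : AnalyticAt ℝ (fun z => C + (W z + conj (W z))) z₀ :=
      analyticAt_const.add (hWa.add (conj_analytic hWa))
    refine this.congr ?_
    filter_upwards [kc] with z hz
    rw [← hz]; ring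
  refine P.concl cr E1 E2 (B := fun w => (w ^ 3 / 6 + c * w + d)⁻¹ * (w - s z₀)) ?_ ?_ sa
  · exact pia.mul (by fun_prop)
  · filter_upwards [pev] with w hw
    rw [← mul_assoc, mul_inv_cancel₀ hw, one_mul]

theorem const_punctured {D : ℂ → ℂ} {z₀ : ℂ} (h : ∀ᶠ z in 𝓝 z₀, z ≠ z₀ → HW D 0 0 z) :
    ∃ C, ∀ᶠ z in 𝓝 z₀, z ≠ z₀ → D z = C := by
  obtain ⟨r, hr, hb⟩ := Metric.eventually_nhds_iff_ball.1 h
  have hlr : Real.exp (Real.log r) = r := Real.exp_log hr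
  have hconv : Convex ℝ {w : ℂ | w.re < Real.log r} := convex_halfSpace_re_lt _
  have hopen : IsOpen {w : ℂ | w.re < Real.log r} := isOpen_lt continuous_re continuous_const
  have hD : ∀ w ∈ {w : ℂ | w.re < Real.log r}, HasFDerivAt (fun w => D (z₀ + exp w)) (0 : ℂ →L[ℝ] ℂ) w := by
    intro w hw
    have hw' : w.re < Real.log r := hw
    have h1 : HW D 0 0 (z₀ + exp w) := by
      apply hb
      · simp only [Metric.mem_ball, dist_self_add_left, Complex.norm_exp]
        rw [← hlr]; exact Real.exp_lt_exp.2 hw'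
      · simp [Complex.exp_ne_zero]
    have h2 : HasFDerivAt (fun w => z₀ + exp w) ((ContinuousLinearMap.restrictScalars ℝ
        (ContinuousLinearMap.toSpanSingleton ℂ (exp w)))) w :=
      (((Complex.hasDerivAt_exp w).const_add z₀).hasFDerivAt.restrictScalars ℝ)
    unfold HW at h1
    refine (HasFDerivAt.comp w h1 h2).congr_fderiv ?_
    ext v; simp
  set w₀ : ℂ := ((Real.log r - 1 : ℝ) : ℂ) with hw₀
  refine ⟨D (z₀ + exp w₀), Metric.eventually_nhds_iff_ball.2 ⟨r, hr, fun z hz hne => ?_⟩⟩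
  have hne' : z - z₀ ≠ 0 := sub_ne_zero.2 hne
  have hz' : (Complex.log (z - z₀)) ∈ {w : ℂ | w.re < Real.log r} := by
    simp only [Set.mem_ofPred_eq, Complex.log_re]
    exact Real.log_lt_log (norm_pos_iff.2 hne') (by simpa [dist_eq_norm] using hz)
  have hw₀' : w₀ ∈ {w : ℂ | w.re < Real.log r} := by
    simp only [Set.mem_ofPred_eq, hw₀, Complex.ofReal_re]; linarith
  have := hconv.is_const_of_fderivWithin_eq_zero (𝕜 := ℝ) (f := fun w => D (z₀ + exp w))
    (fun w hw => (hD w hw).differentiableAt.differentiableWithinAt)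
    (fun w hw => by rw [fderivWithin_of_isOpen hopen hw, (hD w hw).fderiv]) hz' hw₀'
  simpa [Complex.exp_log hne'] using this

theorem linearize {a : ℂ → ℂ} {z₀ : ℂ} (ha : AnalyticAt ℂ a z₀) (h0 : a z₀ = 0)
    {l : ℂ} (hl : deriv a z₀ = l) (hl0 : l ≠ 0) :
    ∃ W W' : ℂ → ℂ, (∀ᶠ z in 𝓝 z₀, HasDerivAt W (W' z) z) ∧ W z₀ = 0 ∧ W' z₀ = 1 ∧
      (∀ᶠ z in 𝓝 z₀, z ≠ z₀ → W z ≠ 0 ∧ a z ≠ 0) ∧ ∀ᶠ z in 𝓝 z₀, a z * W' z = l * W z := by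
  have hds : ∀ g : ℂ → ℂ, AnalyticAt ℂ g z₀ → AnalyticAt ℂ (dslope g z₀) z₀ := by
    intro g hg
    obtain ⟨p, hp⟩ := hg
    exact ⟨_, hp.has_fpower_series_dslope_fslope⟩
  set b := dslope a z₀ with hb
  have hba : AnalyticAt ℂ b z₀ := hds a ha
  have hb0 : b z₀ = l := by rw [hb, dslope_same, hl]
  set b1 := dslope b z₀ with hb1
  have hb1a : AnalyticAt ℂ b1 z₀ := hds b hba
  have ea : ∀ z, a z = (z - z₀) * b z := fun z => by
    have := sub_smul_dslope a z₀ z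
    rw [h0, sub_zero] at this; rw [← this]; simp [hb]
  have eb : ∀ z, b z = l + (z - z₀) * b1 z := fun z => by
    have := sub_smul_dslope b z₀ z
    rw [smul_eq_mul, ← hb1, hb0] at this; rw [this]; ring
  have bne : b z₀ ≠ 0 := by rw [hb0]; exact hl0
  have bev : ∀ᶠ z in 𝓝 z₀, b z ≠ 0 := hba.continuousAt.eventually_ne bne
  have hea : AnalyticAt ℂ (fun z => - b1 z / b z) z₀ := hb1a.neg.div hba bne
  obtain ⟨E, hE0, hE⟩ := germ_prim hea
  refine ⟨fun z => (z - z₀) * exp (E z), fun z => exp (E z) * (l / b z), ?_, by simp, ?_, ?_, ?_⟩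
  · filter_upwards [hE, bev] with z h1 h2
    refine (((hasDerivAt_id z).sub_const z₀).mul h1.cexp).congr_deriv ?_
    simp only [id]
    field_simp
    linear_combination eb z
  · simp [hE0, hb0, hl0]
  · filter_upwards [bev] with z h2 hne
    have : z - z₀ ≠ 0 := sub_ne_zero.2 hne
    refine ⟨mul_ne_zero this (exp_ne_zero _), ?_⟩
    rw [ea]; exact mul_ne_zero this h2
  · filter_upwards [bev] with z h2
    rw [ea]; field_simp

theorem Pack.case2 (P : Pack f h μ s a z₀) {c d : ℂ} (cr : conj c = c)
    (E1 : ∀ᶠ z in 𝓝 z₀, a z * conj (μ z) + deriv a z = s z ^ 2 / 2 + c)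
    (E2 : ∀ᶠ z in 𝓝 z₀, h z * (a z * conj (a z)) = s z ^ 3 / 6 + c * s z + d)
    (ha0 : a z₀ = 0) (hl0 : s z₀ ^ 2 / 2 + c ≠ 0) : AnalyticAt ℝ f z₀ := by
  have haa : AnalyticAt ℂ a z₀ := germ_hol P.ha
  have hsr := P.sr.self_of_nhds
  set s₀ := s z₀ with hs₀
  set l := s₀ ^ 2 / 2 + c with hl
  have lr : conj l = l := by
    simp only [hl, map_add, map_div₀, map_pow, hsr, cr, Complex.conj_ofNat]
  have hda : deriv a z₀ = l := by
    have := E1.self_of_nhds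
    rw [ha0] at this; rw [← hs₀] at this; simpa using this
  have hp0 : s₀ ^ 3 / 6 + c * s₀ + d = 0 := by
    have := E2.self_of_nhds
    rw [ha0] at this; simpa using this.symm
  have pd : ∀ w : ℂ, HasDerivAt (fun w : ℂ => w ^ 3 / 6 + c * w + d) (w ^ 2 / 2 + c) w := fun w => by
    have := ((((hasDerivAt_id w).pow 3).div_const 6).add ((hasDerivAt_id w).const_mul c)).add_const d
    refine this.congr_deriv ?_
    simp; ring
  have pa : AnalyticAt ℂ (fun w : ℂ => w ^ 3 / 6 + c * w + d) s₀ := by fun_prop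
  -- Q linearizes the polynomial
  obtain ⟨Q, Q', hQ, hQ0, hQ1, -, hQe⟩ := linearize pa hp0 (pd s₀).deriv hl0
  obtain ⟨W, W', hW, hW0, hW1, hWne, hWe⟩ := linearize haa ha0 hda hl0
  have cs := P.cont_s
  have key : ∀ᶠ z in 𝓝 z₀, z ≠ z₀ → HW (fun z => Q (s z) * (W z * conj (W z))⁻¹) 0 0 z := by
    filter_upwards [cs.eventually hQ, cs.eventually hQe, hW, hWe, hWne, P.hs, E2] with
      z h1 h2 h3 h4 h5 h6 e hne
    obtain ⟨hw, hz⟩ := h5 hne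
    have hw' : conj (W z) ≠ 0 := by simpa using hw
    have hz' : conj (a z) ≠ 0 := by simpa using hz
    have h4' := congrArg conj h4
    simp only [map_mul, lr] at h4'
    rw [← e, ← hl] at h2
    have k1 : Q' (s z) * (h z * conj (a z)) * W z = Q (s z) * W' z := by
      apply mul_left_cancel₀ hz
      linear_combination W z * h2 - Q (s z) * h4
    have k2 : Q' (s z) * (h z * a z) * conj (W z) = Q (s z) * conj (W' z) := by
      apply mul_left_cancel₀ hz'
      linear_combination conj (W z) * h2 - Q (s z) * h4'
    have hww := mul_ne_zero hw hw'
    refine ((HW.comp h1 h6).mul (((HW.hol h3).mul (HW.hol h3).conj).inv hww)).congr' ?_ ?_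
    · rw [map_zero, ← div_eq_mul_inv, mul_div_assoc', div_add_div _ _ hww (pow_ne_zero 2 hww),
        div_eq_zero_iff]
      left
      linear_combination (W z * conj (W z)) * conj (W z) * k1
    · rw [← div_eq_mul_inv, mul_div_assoc', div_add_div _ _ hww (pow_ne_zero 2 hww),
        div_eq_zero_iff]
      left
      linear_combination (W z * conj (W z)) * W z * k2
  obtain ⟨C, hC⟩ := const_punctured key
  have hWa : AnalyticAt ℝ W z₀ := (germ_hol hW).restrictScalars
  have sa : AnalyticAt ℝ s z₀ := by
    refine inv_analytic (Q' := 1) (germ_hol hQ) (by rw [← hQ1]; exact hQ.self_of_nhds) one_ne_zero cs ?_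
    have : AnalyticAt ℝ (fun z => C * (W z * conj (W z))) z₀ :=
      analyticAt_const.mul (hWa.mul (conj_analytic hWa))
    refine this.congr ?_
    filter_upwards [hC, hWne] with z hz h5
    by_cases hne : z = z₀
    · rw [hne, hW0, ← hs₀, hQ0]; simp
    · obtain ⟨hw, -⟩ := h5 hne
      have hw' : conj (W z) ≠ 0 := by simpa using hw
      rw [← hz hne]; field_simp
  have ra : AnalyticAt ℂ (fun w => l + s₀ / 2 * (w - s₀) + (w - s₀) ^ 2 / 6) s₀ := by fun_prop
  have rne : l + s₀ / 2 * (s₀ - s₀) + (s₀ - s₀) ^ 2 / 6 ≠ 0 := by simpa using hl0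
  refine P.concl cr E1 E2 (B := fun w => (l + s₀ / 2 * (w - s₀) + (w - s₀) ^ 2 / 6)⁻¹)
    (ra.inv rne) ?_ sa
  filter_upwards [ra.continuousAt.eventually_ne rne] with w hw
  rw [← hs₀, ← div_eq_mul_inv, div_eq_iff hw]
  linear_combination hp0 - (w - s₀) * hl


theorem ode_germ {τ : ℂ → ℂ} {z₀ : ℂ} (hτ : AnalyticAt ℂ τ z₀) (α β : ℂ) :
    ∃ u u' : ℂ → ℂ, u z₀ = α ∧ u' z₀ = β ∧ (∀ᶠ z in 𝓝 z₀, HasDerivAt u (u' z) z) ∧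
      ∀ᶠ z in 𝓝 z₀, HasDerivAt u' (τ z * u z) z := by
  obtain ⟨r₁, hr₁, hd₁⟩ := Metric.eventually_nhds_iff_ball.1
    (analyticAt_iff_eventually_differentiableAt.1 hτ)
  set M := ‖τ z₀‖ + 1 with hM
  have hM0 : 0 < M := by positivity
  have hMev : ∀ᶠ z in 𝓝 z₀, ‖τ z‖ < M :=
    hτ.continuousAt.norm.eventually (gt_mem_nhds (by simp [hM]))
  obtain ⟨r₂, hr₂, hd₂⟩ := Metric.eventually_nhds_iff_ball.1 hMev
  obtain ⟨r, hr, hrr₁, hrr₂, hr1, hrM⟩ : ∃ r > 0, r ≤ r₁ ∧ r ≤ r₂ ∧ r ≤ 1 ∧ M * r ≤ 1 / 2 := by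
    refine ⟨min (min r₁ r₂) (min 1 (1 / (2 * M))), by positivity, ?_, ?_, ?_, ?_⟩
    · exact (min_le_left _ _).trans (min_le_left _ _)
    · exact (min_le_left _ _).trans (min_le_right _ _)
    · exact (min_le_right _ _).trans (min_le_left _ _)
    · have : min (min r₁ r₂) (min 1 (1 / (2 * M))) ≤ 1 / (2 * M) :=
        (min_le_right _ _).trans (min_le_right _ _)
      calc _ ≤ M * (1 / (2 * M)) := by gcongr
        _ = 1 / 2 := by field_simp
  set B := Metric.ball z₀ r with hB
  have hz₀ : z₀ ∈ B := Metric.mem_ball_self hr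
  have hdiff : DifferentiableOn ℂ τ B := fun z hz =>
    (hd₁ z (Metric.ball_subset_ball hrr₁ hz)).differentiableWithinAt
  have hbd : ∀ z ∈ B, ‖τ z‖ ≤ M := fun z hz => (hd₂ z (Metric.ball_subset_ball hrr₂ hz)).le
  let S := {p : (ℂ → ℂ) × (ℂ → ℂ) // ∀ z ∈ B, HasDerivAt p.1 (p.2 z) z}
  have step : ∀ p : S, ∃ q : S, q.1.1 z₀ = 0 ∧ q.1.2 z₀ = 0 ∧
      ∀ z ∈ B, HasDerivAt q.1.2 (τ z * p.1.1 z) z := by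
    rintro ⟨⟨v, v'⟩, hv⟩
    have h1 : DifferentiableOn ℂ (fun z => τ z * v z) B :=
      hdiff.mul fun z hz => (hv z hz).differentiableAt.differentiableWithinAt
    obtain ⟨w', hw0', hw'⟩ := h1.isExactOn_ball.with_val_at z₀ 0
    have h2 : DifferentiableOn ℂ w' B :=
      fun z hz => (hw' z hz).differentiableAt.differentiableWithinAt
    obtain ⟨w, hw0, hw⟩ := h2.isExactOn_ball.with_val_at z₀ 0
    exact ⟨⟨⟨w, w'⟩, hw⟩, hw0, hw0', hw'⟩
  choose T hT0 hT0' hT using step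
  let p₀ : S := ⟨⟨fun z => α + β * (z - z₀), fun _ => β⟩, fun z _ => by
    have := (((hasDerivAt_id z).sub_const z₀).const_mul β).const_add α
    simpa using this⟩
  let sq : ℕ → S := fun n => Nat.rec p₀ (fun _ p => T p) n
  have sq0 : sq 0 = p₀ := rfl
  have sqs : ∀ n, sq (n + 1) = T (sq n) := fun n => rfl
  set C := ‖α‖ + ‖β‖ with hC
  have hC0 : 0 ≤ C := by positivity
  have bound : ∀ n, ∀ z ∈ B, ‖(sq n).1.1 z‖ ≤ C * (1 / 2) ^ n ∧ ‖(sq n).1.2 z‖ ≤ C * (1 / 2) ^ n := by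
    intro n
    induction n with
    | zero =>
      intro z hz
      have hz' : ‖z - z₀‖ ≤ 1 := by
        have : dist z z₀ < r := hz
        rw [dist_eq_norm] at this; linarith
      simp only [sq0, p₀, pow_zero, mul_one]
      constructor
      · calc _ ≤ ‖α‖ + ‖β * (z - z₀)‖ := norm_add_le _ _
          _ ≤ ‖α‖ + ‖β‖ * 1 := by rw [norm_mul]; gcongr
          _ = C := by rw [mul_one]
      · simp [hC]
    | succ n ih =>
      have key : ∀ g g' : ℂ → ℂ, g z₀ = 0 → (∀ z ∈ B, HasDerivAt g (g' z) z) → ∀ K : ℝ, 0 ≤ K →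
          (∀ z ∈ B, ‖g' z‖ ≤ K) → ∀ z ∈ B, ‖g z‖ ≤ K * r := by
        intro g g' h0 hg K hK0 hK z hz
        have := (convex_ball z₀ r).norm_image_sub_le_of_norm_hasDerivWithin_le
          (fun w hw => (hg w hw).hasDerivWithinAt) hK hz₀ hz
        rw [h0, sub_zero] at this
        refine this.trans ?_
        have hz' : dist z z₀ < r := hz
        rw [dist_eq_norm] at hz'
        gcongr
      have k1 : ∀ z ∈ B, ‖(sq (n + 1)).1.2 z‖ ≤ C * (1 / 2) ^ (n + 1) := by
        intro z hz
        rw [sqs]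
        have := key _ _ (hT0' (sq n)) (hT (sq n)) (M * (C * (1 / 2) ^ n)) (by positivity)
          (fun w hw => by
            rw [norm_mul]
            exact mul_le_mul (hbd w hw) (ih w hw).1 (norm_nonneg _) hM0.le) z hz
        refine this.trans ?_
        calc M * (C * (1 / 2) ^ n) * r = (M * r) * (C * (1 / 2) ^ n) := by ring
          _ ≤ 1 / 2 * (C * (1 / 2) ^ n) := by gcongr
          _ = _ := by ring
      intro z hz
      refine ⟨?_, k1 z hz⟩
      have := key _ _ (hT0 (sq n)) (T (sq n)).2 (C * (1 / 2) ^ (n + 1)) (by positivity)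
        (by simpa only [sqs] using k1) z hz
      rw [sqs]
      exact this.trans (mul_le_of_le_one_right (by positivity) hr1)
  have sumC : Summable (fun n : ℕ => C * (1 / 2 : ℝ) ^ n) :=
    (summable_geometric_of_lt_one (by norm_num) (by norm_num)).mul_left C
  have sum1 : ∀ z ∈ B, Summable (fun n => (sq n).1.1 z) := fun z hz =>
    Summable.of_norm_bounded sumC fun n => (bound n z hz).1
  have sum2 : ∀ z ∈ B, Summable (fun n => (sq n).1.2 z) := fun z hz =>
    Summable.of_norm_bounded sumC fun n => (bound n z hz).2
  have hBo : IsOpen B := Metric.isOpen_ball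
  have hBp : IsPreconnected B := (convex_ball z₀ r).isPreconnected
  have hBn : B ∈ 𝓝 z₀ := hBo.mem_nhds hz₀
  let D : ℕ → ℂ → ℂ := fun n z => Nat.casesOn n 0 (fun m => τ z * (sq m).1.1 z)
  have D0 : ∀ z, D 0 z = 0 := fun z => rfl
  have Ds : ∀ n z, D (n + 1) z = τ z * (sq n).1.1 z := fun n z => rfl
  have hD : ∀ n, ∀ z ∈ B, HasDerivAt (sq n).1.2 (D n z) z := by
    intro n z hz
    cases n with
    | zero => exact hasDerivAt_const z β
    | succ n => rw [Ds, sqs]; exact hT (sq n) z hz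
  have hDb : ∀ n, ∀ z ∈ B, ‖D n z‖ ≤ 2 * M * (C * (1 / 2) ^ n) := by
    intro n z hz
    cases n with
    | zero => rw [D0, norm_zero]; positivity
    | succ n =>
      rw [Ds, norm_mul]
      calc _ ≤ M * (C * (1 / 2) ^ n) :=
            mul_le_mul (hbd z hz) (bound n z hz).1 (norm_nonneg _) hM0.le
        _ = _ := by ring
  refine ⟨fun z => ∑' n, (sq n).1.1 z, fun z => ∑' n, (sq n).1.2 z, ?_, ?_, ?_, ?_⟩
  · simp only []
    rw [tsum_eq_single 0]
    · simp [sq0, p₀]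
    · intro n hn
      obtain ⟨m, rfl⟩ := Nat.exists_eq_succ_of_ne_zero hn
      exact hT0 (sq m)
  · simp only []
    rw [tsum_eq_single 0]
    · rfl
    · intro n hn
      obtain ⟨m, rfl⟩ := Nat.exists_eq_succ_of_ne_zero hn
      exact hT0' (sq m)
  · filter_upwards [hBn] with z hz
    exact hasDerivAt_tsum_of_isPreconnected sumC hBo hBp (fun n y hy => (sq n).2 y hy)
      (fun n y hy => (bound n y hy).2) hz₀ (sum1 z₀ hz₀) hz
  · filter_upwards [hBn] with z hz
    have := hasDerivAt_tsum_of_isPreconnected (sumC.mul_left (2 * M)) hBo hBp hD hDb hz₀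
      (sum2 z₀ hz₀) hz
    refine this.congr_deriv ?_
    have hs : Summable (fun n => D n z) :=
      Summable.of_norm_bounded (sumC.mul_left (2 * M)) fun n => hDb n z hz
    rw [hs.tsum_eq_zero_add, D0, zero_add]
    simp only [Ds]
    rw [tsum_mul_left]

theorem gron {y p q : ℂ → ℂ} {z₀ : ℂ} {K : ℝ} (hK : 0 ≤ K) (h0 : y z₀ = 0)
    (h : ∀ᶠ z in 𝓝 z₀, HW y (p z) (q z) z) (hb : ∀ᶠ z in 𝓝 z₀, ‖p z‖ + ‖q z‖ ≤ K * ‖y z‖) :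
    ∀ᶠ z in 𝓝 z₀, y z = 0 := by
  obtain ⟨r₁, hr₁, hd⟩ := Metric.eventually_nhds_iff_ball.1 (h.and hb)
  obtain ⟨r, hr, hrr, hKr⟩ : ∃ r > 0, r < r₁ ∧ K * r ≤ 1 / 2 := by
    refine ⟨min (r₁ / 2) (1 / (2 * (K + 1))), by positivity, ?_, ?_⟩
    · exact (min_le_left _ _).trans_lt (by linarith)
    · have : min (r₁ / 2) (1 / (2 * (K + 1))) ≤ 1 / (2 * (K + 1)) := min_le_right _ _
      calc _ ≤ K * (1 / (2 * (K + 1))) := by gcongr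
        _ ≤ 1 / 2 := by rw [mul_one_div, div_le_div_iff₀ (by positivity) (by norm_num)]; linarith
  have hsub : Metric.closedBall z₀ r ⊆ Metric.ball z₀ r₁ := Metric.closedBall_subset_ball hrr
  have hc : ContinuousOn (fun z => ‖y z‖) (Metric.closedBall z₀ r) := fun z hz =>
    ((hd z (hsub hz)).1.cont.norm).continuousWithinAt
  obtain ⟨m, hm, hmax⟩ := (isCompact_closedBall z₀ r).exists_isMaxOn
    ⟨z₀, Metric.mem_closedBall_self hr.le⟩ hc
  have hmax' : ∀ z ∈ Metric.closedBall z₀ r, ‖y z‖ ≤ ‖y m‖ := fun z hz => hmax hz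
  have mv := (convex_closedBall z₀ r).norm_image_sub_le_of_norm_hasFDerivWithin_le (𝕜 := ℝ) (f := y)
    (C := K * ‖y m‖) (fun z hz => HasFDerivAt.hasFDerivWithinAt (hd z (hsub hz)).1) (fun z hz => by
      refine ContinuousLinearMap.opNorm_le_bound _ (by positivity) fun v => ?_
      have h1 := (hd z (hsub hz)).2
      have h2 := hmax' z hz
      simp only [add_apply, smul_apply, ContinuousLinearMap.id_apply,
        ContinuousLinearEquiv.coe_coe, conjCLE_apply, smul_eq_mul]
      calc _ ≤ ‖p z * v‖ + ‖q z * conj v‖ := norm_add_le _ _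
        _ = (‖p z‖ + ‖q z‖) * ‖v‖ := by rw [norm_mul, norm_mul, RCLike.norm_conj]; ring
        _ ≤ (K * ‖y z‖) * ‖v‖ := by gcongr
        _ ≤ _ := by gcongr) (Metric.mem_closedBall_self hr.le) hm
  rw [h0, sub_zero] at mv
  have hm' : ‖m - z₀‖ ≤ r := by rw [← dist_eq_norm]; exact hm
  have hM : ‖y m‖ ≤ 1 / 2 * ‖y m‖ := by
    calc ‖y m‖ ≤ K * ‖y m‖ * ‖m - z₀‖ := mv
      _ ≤ K * ‖y m‖ * r := by gcongr
      _ = K * r * ‖y m‖ := by ring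
      _ ≤ _ := by gcongr
  have hM0 : ‖y m‖ ≤ 0 := by linarith
  filter_upwards [Metric.closedBall_mem_nhds z₀ hr] with z hz
  exact norm_le_zero_iff.1 ((hmax' z hz).trans hM0)

theorem Pack.case3_const (P : Pack f h μ s a z₀) {c d : ℂ}
    (E2 : ∀ᶠ z in 𝓝 z₀, h z * (a z * conj (a z)) = s z ^ 3 / 6 + c * s z + d)
    (ha0 : a z₀ = 0) (hl0 : s z₀ ^ 2 / 2 + c = 0) : ∀ᶠ z in 𝓝 z₀, s z = s z₀ := by
  set s₀ := s z₀ with hs₀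
  have hp0 : s₀ ^ 3 / 6 + c * s₀ + d = 0 := by
    have := E2.self_of_nhds
    rw [ha0] at this; simpa using this.symm
  have hcont : ContinuousAt h z₀ := P.hh.self_of_nhds.cont
  have cb : ContinuousAt (fun z => h z * (s₀ / 2 + (s z - s₀) / 6)) z₀ :=
    hcont.mul (continuousAt_const.add ((P.cont_s.sub continuousAt_const).div_const 6))
  set N := ‖h z₀ * (s₀ / 2 + (s z₀ - s₀) / 6)‖ + 1 with hN
  have hN1 : 1 ≤ N := by
    rw [hN]; linarith [norm_nonneg (h z₀ * (s₀ / 2 + (s z₀ - s₀) / 6))]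
  have hNev : ∀ᶠ z in 𝓝 z₀, ‖h z * (s₀ / 2 + (s z - s₀) / 6)‖ < N :=
    cb.norm.eventually (gt_mem_nhds (by simp [hN]))
  have g := gron (z₀ := z₀) (y := fun z => s z - s₀) (p := fun z => h z * conj (a z)) (q := fun z => h z * a z)
    (K := 2 * N) (by positivity) (by simp [hs₀]) (by
      filter_upwards [P.hs] with z hz
      exact (hz.sub (HW.const s₀ z)).congr' (by simp) (by simp)) (by
      filter_upwards [E2, hNev] with z e hn
      have e' : h z * (h z * (a z * conj (a z))) =
          h z * (s₀ / 2 + (s z - s₀) / 6) * (s z - s₀) ^ 2 := by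
        rw [e]; linear_combination h z * hp0 + h z * (s z - s₀) * hl0
      have e2 := congrArg norm e'
      simp only [norm_mul, RCLike.norm_conj, norm_pow] at e2 hn ⊢
      have : (‖h z‖ * ‖a z‖) ^ 2 ≤ (N * ‖s z - s₀‖) ^ 2 := by
        calc (‖h z‖ * ‖a z‖) ^ 2 = ‖h z‖ * ‖s₀ / 2 + (s z - s₀) / 6‖ * ‖s z - s₀‖ ^ 2 := by
              rw [← e2]; ring
          _ ≤ N * ‖s z - s₀‖ ^ 2 := by gcongr
          _ ≤ N * N * ‖s z - s₀‖ ^ 2 := by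
              gcongr; nlinarith
          _ = _ := by ring
      have := (pow_le_pow_iff_left₀ (by positivity) (by positivity) two_ne_zero).1 this
      linarith)
  filter_upwards [g] with z hz
  exact sub_eq_zero.1 hz

theorem Pack.case3_zero (P : Pack f h μ s a z₀) (hs : ∀ᶠ z in 𝓝 z₀, s z = 0) :
    AnalyticAt ℝ f z₀ := by
  obtain ⟨p, q, hF1, hF2⟩ := P.hF
  have hν : AnalyticAt ℂ (fun z => conj (μ z)) z₀ := by
    apply germ_analytic
    filter_upwards [P.hμ, hs] with z ⟨m, h1⟩ h2
    have := h1.conj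
    simp only [h2, zero_mul, map_zero] at this
    exact this.hasDerivAt.differentiableAt
  obtain ⟨E, -, hE⟩ := germ_prim hν
  set κ : ℂ → ℂ := fun z => h z * exp (- E z) with hκ
  have hκd : ∀ᶠ z in 𝓝 z₀, ∃ m, HW κ 0 m z := by
    filter_upwards [P.hh, hE] with z h1 h2
    refine ⟨_, (h1.mul (HW.hol h2.neg.cexp)).congr' ?_ rfl⟩
    simp only [Pi.neg_apply]
    ring
  have hκa : AnalyticAt ℂ (fun z => conj (κ z)) z₀ := by
    apply germ_analytic
    filter_upwards [hκd] with z ⟨m, h1⟩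
    have := h1.conj
    simp only [map_zero] at this
    exact this.hasDerivAt.differentiableAt
  obtain ⟨E3, -, hE3⟩ := germ_prim hκa
  obtain ⟨E2, -, hE2⟩ := germ_prim (germ_hol hE).cexp
  refine germ_final (g := fun z => E2 z * conj (E3 z)) (p' := fun z => exp (E z) * conj (E3 z))
    (q' := fun z => E2 z * κ z) hF1 hF2 ?_ ?_ ?_
  · exact (germ_hol hE2).restrictScalars.mul (conj_analytic (germ_hol hE3).restrictScalars)
  · filter_upwards [hE2, hE3] with z h2 h3
    exact ((HW.hol h2).mul (HW.hol h3).conj).congr' (by simp) (by simp)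
  · filter_upwards [hE, hE3] with z h2 h3
    refine ⟨_, ((HW.hol h2.cexp).mul (HW.hol h3).conj).congr' rfl ?_⟩
    simp only [hκ, conj_conj, zero_mul, zero_add]
    rw [mul_left_comm, ← Complex.exp_add]; simp

theorem Pack.case3_ne (P : Pack f h μ s a z₀) {k : ℂ} (kr : conj k = k) (hk : k ≠ 0)
    (hs : ∀ᶠ z in 𝓝 z₀, s z = k) : AnalyticAt ℝ f z₀ := by
  obtain ⟨p, q, hF1, hF2⟩ := P.hF
  set ν : ℂ → ℂ := fun z => conj (μ z) with hν
  have smν : ∀ᶠ z in 𝓝 z₀, ContDiffAt ℝ (⊤ : ℕ∞) ν z := by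
    filter_upwards [P.sm_μ] with z hz
    exact (conjCLE : ℂ →L[ℝ] ℂ).contDiff.contDiffAt.comp z hz
  set ν1 := wirtingerZ ν with hν1
  have dν : ∀ᶠ z in 𝓝 z₀, HW ν (ν1 z) (k * h z) z := by
    filter_upwards [P.hμ, hs, P.hr] with z ⟨m, h1⟩ h2 h3
    have := h1.conj
    rw [map_mul, h2, kr, h3] at this
    exact this.congr' this.wz.symm rfl
  set τ : ℂ → ℂ := fun z => ν z * ν z * (1/4) - ν1 z * (1/2) with hτ
  have τa : AnalyticAt ℂ τ z₀ := by
    apply germ_analytic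
    filter_upwards [smν, dν, dν.eventually_nhds, P.hh] with z h1 h2 h3 h4
    have h5 := sm_HW (sm_wz h1)
    have e := HW.mixed h1 h3 h5 ((HW.const k z).mul h4)
    refine (HW.hasDerivAt (((((h2.mul h2).mul (HW.const (1/4) z)).sub
      (h5.mul (HW.const (1/2) z))).congr' rfl ?_))).differentiableAt
    rw [e]; simp only [hν]; ring
  obtain ⟨u, u', hu0, hu0', hu, hu'⟩ := ode_germ τa 1 0
  obtain ⟨w, w', hw0, hw0', hw, hw'⟩ := ode_germ τa 0 1
  have wr : ∀ᶠ z in 𝓝 z₀, u z * w' z - u' z * w z = 1 := by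
    have := HW.germ_const (f := fun z => u z * w' z - u' z * w z) (z₀ := z₀) (by
      filter_upwards [hu, hu', hw, hw'] with z h1 h2 h3 h4
      exact (HW.hol ((h1.mul h4).sub (h2.mul h3))).congr' (by ring) rfl)
    simpa [hu0, hu0', hw0, hw0'] using this
  have h00 := P.h0.self_of_nhds
  have hcont : ContinuousAt h z₀ := P.hh.self_of_nhds.cont
  have slit : ∀ᶠ z in 𝓝 z₀, (h z₀)⁻¹ * h z ∈ slitPlane := by
    have : ContinuousAt (fun z => (h z₀)⁻¹ * h z) z₀ := continuousAt_const.mul hcont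
    refine this.eventually (isOpen_slitPlane.mem_nhds ?_)
    show (h z₀)⁻¹ * h z₀ ∈ slitPlane
    rw [inv_mul_cancel₀ h00]; simp
  set v : ℂ → ℂ := fun z => exp ((-1/2) * log ((h z₀)⁻¹ * h z)) with hv
  have dv : ∀ᶠ z in 𝓝 z₀, HW v (-ν z / 2 * v z) (-μ z / 2 * v z) z := by
    filter_upwards [slit, P.hh, P.h0] with z h1 h2 h3
    have hl : HasDerivAt (fun x : ℂ => exp ((-1/2) * log ((h z₀)⁻¹ * x)))
        (v z * ((-1/2) * (h z)⁻¹)) (h z) := by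
      have a1 : HasDerivAt (fun x : ℂ => (h z₀)⁻¹ * x) ((h z₀)⁻¹) (h z) := by
        simpa using (hasDerivAt_id (h z)).const_mul ((h z₀)⁻¹)
      refine (((a1.clog h1).const_mul (-1/2 : ℂ)).cexp).congr_deriv ?_
      simp only [hv]
      field_simp
    refine (HW.comp hl h2).congr' ?_ ?_
    · field_simp; simp only [hν]
    · field_simp
  have v0 : v z₀ = 1 := by simp [hv, inv_mul_cancel₀ h00]
  have vzz : ∀ᶠ z in 𝓝 z₀, ∃ m, HW (fun z => -ν z / 2 * v z) (τ z * v z) m z := by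
    filter_upwards [dν, dv] with z h1 h2
    have := ((HW.const (-1/2) z).mul h1).mul h2
    refine ⟨_, (this.congrF (Eventually.of_forall fun x => ?_)).congr' ?_ rfl⟩
    · simp only []; ring
    · simp only [hτ]; ring
  -- the coefficients are antiholomorphic
  have coef : ∀ g g' : ℂ → ℂ, (∀ᶠ z in 𝓝 z₀, HasDerivAt g (g' z) z) →
      (∀ᶠ z in 𝓝 z₀, HasDerivAt g' (τ z * g z) z) →
      AnalyticAt ℝ (fun z => v z * g' z - (-ν z / 2 * v z) * g z) z₀ := by
    intro g g' hg hg'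
    have : ∀ᶠ z in 𝓝 z₀, ∃ m, HW (fun z => v z * g' z - (-ν z / 2 * v z) * g z) 0 m z := by
      filter_upwards [hg, hg', dv, vzz] with z h1 h2 h3 ⟨m, h4⟩
      exact ⟨_, ((h3.mul (HW.hol h2)).sub (h4.mul (HW.hol h1))).congr' (by ring) rfl⟩
    refine germ_antihol (q := wirtingerZbar (fun z => v z * g' z - (-ν z / 2 * v z) * g z)) ?_
    filter_upwards [this] with z ⟨m, hm⟩
    exact hm.congr' rfl hm.wzb.symm
  have va : AnalyticAt ℝ v z₀ := by
    have h1 := coef w w' hw hw'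
    have h2 := coef u u' hu hu'
    have := (h1.mul (germ_hol hu).restrictScalars).sub (h2.mul (germ_hol hw).restrictScalars)
    refine this.congr ?_
    filter_upwards [wr] with z hz
    simp only [Pi.mul_apply, Pi.sub_apply]
    linear_combination v z * hz
  have vslit : ∀ᶠ z in 𝓝 z₀, v z ∈ slitPlane :=
    va.continuousAt.eventually (isOpen_slitPlane.mem_nhds (by rw [v0]; simp))
  refine germ_final (g := fun z => (-2 / k) * log (v z)) (p' := fun z => k⁻¹ * ν z)
    (q' := fun z => k⁻¹ * μ z) hF1 hF2 ?_ ?_ ?_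
  · have hl : AnalyticAt ℂ (fun x => (-2 / k) * log x) (v z₀) :=
      analyticAt_const.mul (analyticAt_clog (by rw [v0]; simp))
    exact AnalyticAt.comp (f := v) hl.restrictScalars va
  · filter_upwards [vslit, dv] with z h1 h2
    have hl : HasDerivAt (fun x => (-2 / k) * log x) ((-2 / k) * (v z)⁻¹) (v z) :=
      (Complex.hasDerivAt_log h1).const_mul _
    have hv0 : v z ≠ 0 := by simp only [hv]; exact exp_ne_zero _
    refine (HW.comp hl h2).congr' ?_ ?_
    · field_simp
    · field_simp
  · filter_upwards [dν] with z h1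
    refine ⟨_, ((HW.const k⁻¹ z).mul h1).congr' rfl ?_⟩
    field_simp; ring



theorem Pack.main (P : Pack f h μ s a z₀) : AnalyticAt ℝ f z₀ := by
  obtain ⟨c, d, cr, -, E1, E2⟩ := P.consts
  by_cases ha0 : a z₀ = 0
  · by_cases hl0 : s z₀ ^ 2 / 2 + c = 0
    · have hs := P.case3_const E2 ha0 hl0
      by_cases hk : s z₀ = 0
      · rw [hk] at hs; exact P.case3_zero hs
      · exact P.case3_ne P.sr.self_of_nhds hk hs
    · exact P.case2 cr E1 E2 ha0 hl0
  · exact P.case1 cr E1 E2 ha0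



end LobodaAux

/-- Let `F` be a `C^∞`-smooth real-valued function on an open set `U ⊆ ℂ` with `F_{zz̄}`
nowhere vanishing on `U`, and suppose `μ := F_{zz̄z̄} / F_{zz̄}` satisfies Loboda's
zero CR-curvature equation `μ_{zz̄z̄} - 3 μ_{zz̄} μ + 2 μ_z μ² - μ_z μ_z̄ = 0` on `U`.
Then `F` is real-analytic on `U`.  (Theorem 1.1 via Remark 1.2.) -/
theorem loboda_spherical_graphing_function_is_real_analytic
    (U : Set ℂ) (hU : IsOpen U)
    (F : ℂ → ℝ) (hF : ContDiffOn ℝ (⊤ : ℕ∞) F U)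
    (hnv : ∀ z ∈ U, wirtingerZbar (wirtingerZ (fun w => (F w : ℂ))) z ≠ 0)
    (μ : ℂ → ℂ)
    (hμ : μ = fun z =>
      wirtingerZbar (wirtingerZbar (wirtingerZ (fun w => (F w : ℂ)))) z /
        wirtingerZbar (wirtingerZ (fun w => (F w : ℂ))) z)
    (heq : ∀ z ∈ U,
      wirtingerZbar (wirtingerZbar (wirtingerZ μ)) z
        - 3 * wirtingerZbar (wirtingerZ μ) z * μ z
        + 2 * wirtingerZ μ z * (μ z) ^ 2
        - wirtingerZ μ z * wirtingerZbar μ z = 0) :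
    AnalyticOnNhd ℝ F U := by
  intro z₀ hz₀
  obtain ⟨h, s, a, P⟩ := mk_pack U hU F hF hnv μ hμ heq z₀ hz₀
  have h1 := P.main
  have h2 := (reCLM.analyticAt _).comp h1
  exact h2.congr (Filter.Eventually.of_forall fun z => by simp)
end

section
/- Let D = {z ∈ ℂ : |z| < 1} and define F : D → ℝ by F(z) := arcsin(|z|²). Then F is C^∞-smooth on D, and at every point of D it satisfies F_{zz} = z·(F_z)³ and F_{zz̄} = (1 − |z|⁴)^{−1/2} + |z|⁴·(1 − |z|⁴)^{−3/2}; in particular F_{zz̄} > 0 on D. -/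
open Complex

theorem aux_radial (φ : ℝ → ℝ) (φ' : ℝ) (z : ℂ) (h : HasDerivAt φ φ' (‖z‖ ^ 2)) :
    HasFDerivAt (fun w : ℂ => ((φ (‖w‖ ^ 2) : ℝ) : ℂ))
      (Complex.ofRealCLM.comp (φ' • ((2 : ℝ) • innerSL ℝ z))) z := by
  have h1 : HasFDerivAt (fun w : ℂ => ‖w‖ ^ 2) ((2 : ℝ) • innerSL ℝ z) z := by
    have := (hasStrictFDerivAt_norm_sq z).hasFDerivAt
    have e : (2 : ℝ) • innerSL ℝ z = (2 : ℕ) • innerSL ℝ z := by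
      rw [two_smul, two_smul]
    rw [e]
    exact this
  have h2 := h.comp_hasFDerivAt z h1
  exact Complex.ofRealCLM.hasFDerivAt.comp z h2

theorem aux_wz (g : ℂ → ℂ) (L : ℂ →L[ℝ] ℂ) (z : ℂ) (h : HasFDerivAt g L z) :
    wirtingerZ g z = (1 / 2 : ℂ) * (L 1 - Complex.I * L Complex.I) := by
  simp only [wirtingerZ, h.fderiv]

theorem aux_wzb (g : ℂ → ℂ) (L : ℂ →L[ℝ] ℂ) (z : ℂ) (h : HasFDerivAt g L z) :
    wirtingerZbar g z = (1 / 2 : ℂ) * (L 1 + Complex.I * L Complex.I) := by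
  simp only [wirtingerZbar, h.fderiv]

theorem aux_sqrt (t : ℝ) (ht : 0 < 1 - t ^ 2) :
    HasDerivAt (fun x : ℝ => (Real.sqrt (1 - x ^ 2))⁻¹) (t * (Real.sqrt (1 - t ^ 2))⁻¹ ^ 3) t := by
  have h1 : HasDerivAt (fun x : ℝ => 1 - x ^ 2) (-(2 * t)) t := by
    simpa using (hasDerivAt_pow 2 t).const_sub 1
  have h2 := (h1.sqrt ht.ne').inv (Real.sqrt_pos.2 ht).ne'
  refine h2.congr_deriv ?_
  have := (Real.sqrt_pos.2 ht).ne'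
  generalize Real.sqrt (1 - t ^ 2) = s at *
  field_simp

theorem aux_lt (z : ℂ) (hz : z ∈ Metric.ball (0 : ℂ) 1) : ‖z‖ ^ 2 < 1 := by
  have : ‖z‖ < 1 := by simpa using hz
  have := norm_nonneg z
  nlinarith

theorem aux_first (z : ℂ) (hz : z ∈ Metric.ball (0 : ℂ) 1) :
    wirtingerZ (fun w : ℂ => (Real.arcsin (‖w‖ ^ 2) : ℂ)) z
      = (((Real.sqrt (1 - (‖z‖ ^ 2) ^ 2))⁻¹ : ℝ) : ℂ) * (starRingEnd ℂ) z := by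
  have h1 := aux_lt z hz
  have h0 : 0 ≤ ‖z‖ ^ 2 := by positivity
  rw [aux_wz _ _ z (aux_radial _ _ z (Real.hasDerivAt_arcsin (by linarith) h1.ne))]
  apply Complex.ext <;> simp [Complex.inner] <;> ring

theorem aux_second (z : ℂ) (hz : z ∈ Metric.ball (0 : ℂ) 1) :
    ∃ L : ℂ →L[ℝ] ℂ,
    HasFDerivAt (wirtingerZ (fun w : ℂ => (Real.arcsin (‖w‖ ^ 2) : ℂ))) L z ∧
    ∀ v, L v = (((Real.sqrt (1 - (‖z‖ ^ 2) ^ 2))⁻¹ : ℝ) : ℂ) * (starRingEnd ℂ) v +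
      ((‖z‖ ^ 2 * (Real.sqrt (1 - (‖z‖ ^ 2) ^ 2))⁻¹ ^ 3 * (2 * (z.re * v.re + z.im * v.im)) : ℝ) : ℂ)
        * (starRingEnd ℂ) z := by
  have h1 := aux_lt z hz
  have h0 : 0 ≤ ‖z‖ ^ 2 := by positivity
  have hA := aux_radial _ _ z (aux_sqrt (‖z‖ ^ 2) (by nlinarith))
  have hB : HasFDerivAt (fun w : ℂ => (starRingEnd ℂ) w) (Complex.conjCLE : ℂ →L[ℝ] ℂ) z :=
    Complex.conjCLE.hasFDerivAt
  refine ⟨_, (hA.mul hB).congr_of_eventuallyEq ?_, ?_⟩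
  · filter_upwards [Metric.isOpen_ball.mem_nhds hz] with w hw
    exact aux_first w hw
  · intro v
    apply Complex.ext <;> simp [Complex.inner] <;> ring

/-- The graphing function `F(z) = arcsin(|z|²)` of the rigid hypersurface `sin u = |z|²`
is `C^∞`-smooth on the unit disc, satisfies the zero CR-curvature equation
`F_zz = z (F_z)³`, and has Levi form
`F_{zz̄} = (1-|z|⁴)^{-1/2} + |z|⁴ (1-|z|⁴)^{-3/2} > 0`. -/
theorem arcsin_normSq_spherical_and_levi_nondegenerate :
    ContDiffOn ℝ (⊤ : ℕ∞) (fun z : ℂ => Real.arcsin (‖z‖ ^ 2)) (Metric.ball (0 : ℂ) 1) ∧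
    ∀ z ∈ Metric.ball (0 : ℂ) 1,
      wirtingerZ (wirtingerZ (fun w : ℂ => (Real.arcsin (‖w‖ ^ 2) : ℂ))) z
        = z * (wirtingerZ (fun w : ℂ => (Real.arcsin (‖w‖ ^ 2) : ℂ)) z) ^ 3 ∧
      wirtingerZbar (wirtingerZ (fun w : ℂ => (Real.arcsin (‖w‖ ^ 2) : ℂ))) z
        = (((1 - ‖z‖ ^ 4) ^ (-(1 / 2) : ℝ)
            + ‖z‖ ^ 4 * (1 - ‖z‖ ^ 4) ^ (-(3 / 2) : ℝ) : ℝ) : ℂ) ∧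
      0 < (1 - ‖z‖ ^ 4) ^ (-(1 / 2) : ℝ)
            + ‖z‖ ^ 4 * (1 - ‖z‖ ^ 4) ^ (-(3 / 2) : ℝ) := by
  constructor
  · intro z hz
    have h1 := aux_lt z hz
    have h0 : 0 ≤ ‖z‖ ^ 2 := by positivity
    apply ContDiffAt.contDiffWithinAt
    have ha : ContDiffAt ℝ (⊤ : ℕ∞) Real.arcsin (‖z‖ ^ 2) :=
      Real.contDiffAt_arcsin (by linarith) h1.ne
    have hb : ContDiffAt ℝ (⊤ : ℕ∞) (fun w : ℂ => ‖w‖ ^ 2) z := (contDiff_norm_sq ℝ).contDiffAt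
    exact ContDiffAt.comp (g := Real.arcsin) z ha hb
  · intro z hz
    have h1 := aux_lt z hz
    have h0 : 0 ≤ ‖z‖ ^ 2 := by positivity
    have hpos : 0 < 1 - ‖z‖ ^ 4 := by nlinarith
    obtain ⟨L, hL, hv⟩ := aux_second z hz
    have e4 : (‖z‖ ^ 2) ^ 2 = ‖z‖ ^ 4 := by ring
    have hn : ‖z‖ ^ 2 = z.re ^ 2 + z.im ^ 2 := by
      rw [Complex.sq_norm, Complex.normSq_apply]; ring
    have r1 : (1 - ‖z‖ ^ 4) ^ (-(1 / 2) : ℝ) = (Real.sqrt (1 - (‖z‖ ^ 2) ^ 2))⁻¹ := by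
      rw [e4, Real.rpow_neg hpos.le, Real.sqrt_eq_rpow]
    have r3 : (1 - ‖z‖ ^ 4) ^ (-(3 / 2) : ℝ) = (Real.sqrt (1 - (‖z‖ ^ 2) ^ 2))⁻¹ ^ 3 := by
      rw [← r1, ← Real.rpow_natCast (_ ^ (-(1 / 2) : ℝ)) 3, ← Real.rpow_mul hpos.le]; norm_num
    refine ⟨?_, ?_, by positivity⟩
    · rw [aux_wz _ _ z hL, aux_first z hz, hv, hv]
      generalize (Real.sqrt (1 - (‖z‖ ^ 2) ^ 2))⁻¹ = s
      rw [hn]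
      apply Complex.ext <;> simp [pow_succ] <;> ring
    · rw [aux_wzb _ _ z hL, r1, r3, hv, hv, ← e4]
      generalize (Real.sqrt (1 - (‖z‖ ^ 2) ^ 2))⁻¹ = s
      rw [hn]
      apply Complex.ext
      · simp [pow_succ]; ring
      · simp [pow_succ, -Complex.ofReal_add, -Complex.ofReal_mul]; try ring
end
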